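/- Let λ ≥ 2 and let θ ∈ S¹ be λ-renormalizable, with λ-shrinking sequence ⟨g_i⟩ and sign sequence ⟨s_i⟩. If v ∈ S¹ satisfies ρ_λ(g_i)v ∈ cl(Q_{s_i}) for every i ≥ 0, then v = θ. -/

import Mathlib

noncomputable section

abbrev F2 := FreeGroup Bool

def gh : F2 := FreeGroup.of true
def gv : F2 := FreeGroup.of false

def hmat (l : ℝ) : Matrix.SpecialLinearGroup (Fin 2) ℝ :=
  ⟨!![1, l; 0, 1], by norm_num [Matrix.det_fin_two_of]⟩

def vmat (l : ℝ) : Matrix.SpecialLinearGroup (Fin 2) ℝ :=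
  ⟨!![1, 0; l, 1], by norm_num [Matrix.det_fin_two_of]⟩

def rho (l : ℝ) : F2 →* Matrix.SpecialLinearGroup (Fin 2) ℝ :=
  FreeGroup.lift fun b => if b then hmat l else vmat l

def act (l : ℝ) (g : F2) (x : Fin 2 → ℝ) : Fin 2 → ℝ :=
  (rho l g).val.mulVec x

def nrm (x : Fin 2 → ℝ) : ℝ := Real.sqrt (x 0 ^ 2 + x 1 ^ 2)

def Circ : Set (Fin 2 → ℝ) := {x | nrm x = 1}

def gens : Set F2 := {gh, gv, gh⁻¹, gv⁻¹}

def ShrinkSet (l : ℝ) (g : F2) : Set (Fin 2 → ℝ) :=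
  {x | x ∈ Circ ∧ nrm (act l g x) < 1}

def ExpSet (l : ℝ) (g : F2) : Set (Fin 2 → ℝ) :=
  {x | x ∈ Circ ∧ 1 < nrm (act l g x)}

def IsGeodesicRay (g : ℕ → F2) : Prop :=
  g 0 = 1 ∧ (∀ n, g (n + 1) * (g n)⁻¹ ∈ gens) ∧ ∀ n, g (n + 2) * (g n)⁻¹ ≠ 1

def IsGeodesicSegment (g : ℕ → F2) (N : ℕ) : Prop :=
  g 0 = 1 ∧ (∀ n, n + 1 ≤ N → g (n + 1) * (g n)⁻¹ ∈ gens) ∧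
    ∀ n, n + 2 ≤ N → g (n + 2) * (g n)⁻¹ ≠ 1

def IsShrinkingSeq (l : ℝ) (g : ℕ → F2) (θ : Fin 2 → ℝ) : Prop :=
  ∀ ε : ℝ, 0 < ε → ∃ i : ℕ, nrm (act l (g i) θ) < ε

def Shrinkable (l : ℝ) (θ : Fin 2 → ℝ) : Prop :=
  ∀ ε : ℝ, 0 < ε → ∃ g : F2, nrm (act l g θ) < ε

def Renormalizable (l : ℝ) (θ : Fin 2 → ℝ) : Prop :=
  Shrinkable l θ ∧ ∀ k : F2, ∀ c : ℝ, act l (k * (gh * gv⁻¹) * k⁻¹) θ ≠ c • θ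

abbrev SP := Bool × Bool

def Quad (s : SP) : Set (Fin 2 → ℝ) :=
  {x | (if s.1 then 0 < x 0 else x 0 < 0) ∧ (if s.2 then 0 < x 1 else x 1 < 0)}

def letterSigma : Bool × Bool → SP → SP
  | (true, true), s => (s.2, s.2)
  | (false, true), s => (s.1, s.1)
  | (true, false), s => (!s.2, s.2)
  | (false, false), s => (s.1, !s.1)

def SigmaAct (g : F2) : SP → SP :=
  (FreeGroup.toWord g).foldr (fun w acc => letterSigma w ∘ acc) id

def gammaAut : F2 →* F2 := FreeGroup.lift fun b => if b then gv⁻¹ else gh⁻¹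

def rPerm (s : SP) : SP := (!s.2, s.1)

def rPermInv (s : SP) : SP := (s.2, !s.1)

def shiftRay (g : ℕ → F2) : ℕ → F2 := fun n => g (n + 1) * (g 1)⁻¹

def TailEquiv (g g' : ℕ → F2) : Prop :=
  ∃ m n : ℕ, shiftRay^[m] g = shiftRay^[n] g'

def seqPow (a : F2) : ℕ → F2 := fun n => a ^ n

def seqPer (a b : F2) : ℕ → F2 := fun n =>
  if n % 2 = 0 then (b * a) ^ (n / 2) else a * (b * a) ^ (n / 2)

def Cond1 (g : ℕ → F2) : Prop :=
  ¬ TailEquiv g (seqPow gh) ∧ ¬ TailEquiv g (seqPow gh⁻¹) ∧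
    ¬ TailEquiv g (seqPow gv) ∧ ¬ TailEquiv g (seqPow gv⁻¹)

def Cond2 (g : ℕ → F2) : Prop :=
  ¬ TailEquiv g (seqPer gh gv⁻¹) ∧ ¬ TailEquiv g (seqPer gh⁻¹ gv)

def adjSum {V : Type} (G : SimpleGraph V) (f : V → ℝ) (v : V) : ℝ :=
  ∑ᶠ w ∈ G.neighborSet v, f w

def BoundedValance {V : Type} (G : SimpleGraph V) : Prop :=
  ∃ D : ℕ, ∀ v, (G.neighborSet v).Finite ∧ (G.neighborSet v).ncard ≤ D

def BipartWith {V : Type} (G : SimpleGraph V) (A : Set V) : Prop :=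
  ∀ v w, G.Adj v w → (v ∈ A ↔ w ∉ A)

def Hop {V : Type} (G : SimpleGraph V) (A : Set V) (k : ℤ) (f : V → ℝ) : V → ℝ :=
  fun v => f v + (k : ℝ) * Set.indicator A (adjSum G f) v

def Vop {V : Type} (G : SimpleGraph V) (A : Set V) (k : ℤ) (f : V → ℝ) : V → ℝ :=
  fun v => f v + (k : ℝ) * Set.indicator Aᶜ (adjSum G f) v

def QuadV {V : Type} (A : Set V) (s : SP) : Set (V → ℝ) :=
  {f | (∀ v ∈ A, f v = 0 ∨ (if s.1 then 0 < f v else f v < 0)) ∧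
       ∀ v, v ∉ A → f v = 0 ∨ (if s.2 then 0 < f v else f v < 0)}

def valance {V : Type} (G : SimpleGraph V) (v : V) : ℕ := (G.neighborSet v).ncard

def evec {V : Type} (v : V) : V → ℝ := Set.indicator {v} 1

def InSpoke {V : Type} (G : SimpleGraph V) (x : V) : Prop :=
  ∃ k : ℕ, 2 ≤ k ∧ ∃ c : ℕ → V,
    (∀ i j, 1 ≤ i → i ≤ k → 1 ≤ j → j ≤ k → c i = c j → i = j) ∧
    valance G (c 1) = 1 ∧
    (∀ i, 2 ≤ i → i ≤ k - 1 →
      valance G (c i) = 2 ∧ G.Adj (c i) (c (i - 1)) ∧ G.Adj (c i) (c (i + 1))) ∧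
    ∃ i, 1 ≤ i ∧ i ≤ k ∧ x = c i


theorem act_mul (l : ℝ) (a b : F2) (x : Fin 2 → ℝ) : act l (a * b) x = act l a (act l b x) := by
  unfold act
  rw [Matrix.mulVec_mulVec, map_mul]
  rfl

theorem act_one (l : ℝ) (x : Fin 2 → ℝ) : act l 1 x = x := by
  simp [act]

theorem act_gh (l : ℝ) (x : Fin 2 → ℝ) : act l gh x 0 = x 0 + l * x 1 ∧ act l gh x 1 = x 1 := by
  simp [act, rho, gh, hmat, Matrix.mulVec, dotProduct, Fin.sum_univ_two]

theorem act_gv (l : ℝ) (x : Fin 2 → ℝ) : act l gv x 0 = x 0 ∧ act l gv x 1 = x 1 + l * x 0 := by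
  simp [act, rho, gv, vmat, Matrix.mulVec, dotProduct, Fin.sum_univ_two, add_comm]

theorem act_ghi (l : ℝ) (x : Fin 2 → ℝ) :
    act l gh⁻¹ x 0 = x 0 - l * x 1 ∧ act l gh⁻¹ x 1 = x 1 := by
  have h := act_gh l (act l gh⁻¹ x)
  rw [← act_mul, mul_inv_cancel, act_one] at h
  refine ⟨?_, h.2.symm⟩
  rw [h.1, ← h.2]; ring

theorem act_gvi (l : ℝ) (x : Fin 2 → ℝ) :
    act l gv⁻¹ x 0 = x 0 ∧ act l gv⁻¹ x 1 = x 1 - l * x 0 := by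
  have h := act_gv l (act l gv⁻¹ x)
  rw [← act_mul, mul_inv_cancel, act_one] at h
  refine ⟨h.1.symm, ?_⟩
  rw [h.2, ← h.1]; ring

theorem no_eig_pos (l : ℝ) (x : Fin 2 → ℝ) (hren : Renormalizable l x) (k : F2)
    (hy : act l k x 1 ≠ 0)
    (h : act l k x 0 ^ 2 + act l k x 1 ^ 2 = l * (act l k x 0 * act l k x 1)) : False := by
  apply hren.2 k⁻¹ (-(act l k x 0 / act l k x 1) ^ 2)
  have key : act l (gh * gv⁻¹) (act l k x) = (-(act l k x 0 / act l k x 1) ^ 2) • act l k x := by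
    generalize act l k x = y at *
    rw [act_mul]
    have h1 := act_gh l (act l gv⁻¹ y)
    have h2 := act_gvi l y
    ext i
    fin_cases i
    · simp only [Fin.zero_eta, Pi.smul_apply, smul_eq_mul]
      rw [h1.1, h2.1, h2.2]
      field_simp
      have : l * y 0 * y 1 = y 0 ^ 2 + y 1 ^ 2 := by rw [h]; ring
      linear_combination (-y 0 ) * this + l * y 1 * h
    · simp only [Fin.mk_one, Pi.smul_apply, smul_eq_mul]
      rw [h1.2, h2.2]
      field_simp
      linear_combination h
  rw [inv_inv, act_mul, act_mul, key]
  have : act l k⁻¹ (act l k x) = x := by rw [← act_mul, inv_mul_cancel, act_one]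
  have hsm : ∀ (c : ℝ) (y : Fin 2 → ℝ), act l k⁻¹ (c • y) = c • act l k⁻¹ y := fun c y =>
    Matrix.mulVec_smul _ _ _
  rw [hsm, this]

theorem no_eig_neg (l : ℝ) (x : Fin 2 → ℝ) (hren : Renormalizable l x) (k : F2)
    (hy : act l k x 0 ≠ 0)
    (h : act l k x 0 ^ 2 + act l k x 1 ^ 2 = -(l * (act l k x 0 * act l k x 1))) : False := by
  have h1 := act_gv l (act l k x)
  have h' : act l (gv * k) x 0 ^ 2 + act l (gv * k) x 1 ^ 2
      = l * (act l (gv * k) x 0 * act l (gv * k) x 1) := by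
    rw [act_mul, h1.1, h1.2]
    linear_combination h
  refine no_eig_pos l x hren (gv * k) ?_ h'
  intro h0
  rw [h0] at h'
  rw [act_mul, h1.1] at h'
  apply hy
  nlinarith

/-- signed letters -/
def LStep (l : ℝ) (k : Bool) (e : ℝ) (X X' : Fin 2 → ℝ) : Prop :=
  if k then X' 0 = X 0 + e * l * X 1 ∧ X' 1 = X 1 else X' 1 = X 1 + e * l * X 0 ∧ X' 0 = X 0

def EStep (k : Bool) (X X' : Fin 2 → ℝ) : Prop :=
  if k then |X 1| < |X' 0| ∧ |X 0| ≤ |X' 0| else |X 0| < |X' 1| ∧ |X 1| ≤ |X' 1|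

theorem aux_rep (a0 c : ℝ) (h : |a0| ≤ |a0 + c|) : |a0 + c| ≤ |a0 + c + c| := by
  have : 2 * (a0 + c) = a0 + (a0 + c + c) := by ring
  have h2 : |2 * (a0 + c)| ≤ |a0| + |a0 + c + c| := by rw [this]; exact abs_add_le _ _
  rw [abs_mul, abs_two] at h2
  linarith

theorem aux_sw (l : ℝ) (hl : 2 ≤ l) (a b e : ℝ) (he : e = 1 ∨ e = -1) (h : |b| < |a|) :
    |a| < |b + e * l * a| := by
  have h1 : |e * l * a| ≤ |b + e * l * a| + |b| := by
    have := abs_sub (b + e * l * a) b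
    simpa using this
  have h2 : |e * l * a| = l * |a| := by
    rw [abs_mul, abs_mul, abs_of_nonneg (by linarith : 0 ≤ l)]
    rcases he with rfl | rfl <;> simp
  have := abs_nonneg a
  nlinarith

theorem EStep_succ (l : ℝ) (hl : 2 ≤ l) (k k' : Bool) (e e' : ℝ) (X X' X'' : Fin 2 → ℝ)
    (he' : e' = 1 ∨ e' = -1)
    (hnb : k = k' → e = e') (h1 : LStep l k e X X') (h2 : LStep l k' e' X' X'')
    (hE : EStep k X X') : EStep k' X' X'' := by
  cases k <;> cases k' <;> simp only [LStep, EStep, if_true, if_false, Bool.false_eq_true] at *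
  · have := hnb trivial; subst this
    have h3 := aux_rep (X 1) (e * l * X 0) (by rw [← h1.1]; exact hE.2)
    rw [h2.1, h1.2, h1.1]
    rw [h1.1] at hE
    exact ⟨lt_of_lt_of_le hE.1 h3, h3⟩
  · have h3 := aux_sw l hl (X' 1) (X' 0) e' he' (by rw [h1.2]; exact hE.1)
    rw [← h2.1] at h3
    rw [← h1.2] at hE
    exact ⟨h3, (hE.1.trans h3).le⟩
  · have h3 := aux_sw l hl (X' 0) (X' 1) e' he' (by rw [h1.2]; exact hE.1)
    rw [← h2.1] at h3
    rw [← h1.2] at hE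
    exact ⟨h3, (hE.1.trans h3).le⟩
  · have := hnb trivial; subst this
    have h3 := aux_rep (X 0) (e * l * X 1) (by rw [← h1.1]; exact hE.2)
    rw [h2.1, h1.2, h1.1]
    rw [h1.1] at hE
    exact ⟨lt_of_lt_of_le hE.1 h3, h3⟩

def n2 (x : Fin 2 → ℝ) : ℝ := x 0 ^ 2 + x 1 ^ 2

theorem EStep_n2 (l : ℝ) (k : Bool) (e : ℝ) (X X' : Fin 2 → ℝ)
    (h1 : LStep l k e X X') (hE : EStep k X X') : n2 X ≤ n2 X' := by
  cases k <;> simp only [LStep, EStep, n2, if_true, if_false, Bool.false_eq_true] at *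
  · have := sq_le_sq.2 hE.2
    rw [h1.2]; linarith
  · have := sq_le_sq.2 hE.2
    rw [h1.2]; linarith

theorem lower_bd (u : ℕ → ℝ) (hu : ∀ i, 0 < u i) (N : ℕ) (hN : ∀ j, N ≤ j → u N ≤ u j) :
    ∃ ε, 0 < ε ∧ ∀ j, ε ≤ u j := by
  have : ∀ M, ∃ ε, 0 < ε ∧ ∀ j, j < M → ε ≤ u j := by
    intro M
    induction M with
    | zero => exact ⟨1, one_pos, by simp⟩
    | succ M ih =>
      obtain ⟨ε, h1, h2⟩ := ih
      refine ⟨min ε (u M), lt_min h1 (hu M), fun j hj => ?_⟩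
      rcases Nat.lt_succ_iff_lt_or_eq.1 hj with h | rfl
      · exact (min_le_left _ _).trans (h2 j h)
      · exact min_le_right _ _
  obtain ⟨ε, h1, h2⟩ := this (N + 1)
  refine ⟨ε, h1, fun j => ?_⟩
  rcases lt_or_ge j (N + 1) with h | h
  · exact h2 j h
  · exact (h2 N (by omega)).trans (hN j (by omega))

theorem no_E (l : ℝ) (hl : 2 ≤ l) (X : ℕ → Fin 2 → ℝ) (k : ℕ → Bool) (e : ℕ → ℝ)
    (he : ∀ n, e n = 1 ∨ e n = -1) (hnb : ∀ n, k n = k (n + 1) → e n = e (n + 1))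
    (hst : ∀ n, LStep l (k n) (e n) (X n) (X (n + 1)))
    (hpos : ∀ n, 0 < n2 (X n)) (hsh : ∀ ε, 0 < ε → ∃ i, n2 (X i) < ε) (n : ℕ) :
    ¬ EStep (k n) (X n) (X (n + 1)) := by
  intro h
  have hall : ∀ j, n ≤ j → EStep (k j) (X j) (X (j + 1)) ∧ n2 (X n) ≤ n2 (X j) := by
    intro j hj
    induction j, hj using Nat.le_induction with
    | base => exact ⟨h, le_rfl⟩
    | succ j hj ih =>
      exact ⟨EStep_succ l hl _ _ _ _ _ _ _ (he _) (hnb j) (hst j) (hst (j + 1)) ih.1,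
        ih.2.trans (EStep_n2 l _ _ _ _ (hst j) ih.1)⟩
  obtain ⟨ε, h1, h2⟩ := lower_bd (fun i => n2 (X i)) hpos n (fun j hj => (hall j hj).2)
  obtain ⟨i, hi⟩ := hsh ε h1
  exact absurd (h2 i) (not_le.2 hi)

def ff (l p q : ℝ) : ℝ := p ^ 2 + q ^ 2 - l * (p * q)

/-- what a step yields for the absolute values -/
def Good (l p q P Q p' q' P' Q' : ℝ) : Prop :=
  ff l P' Q' ≤ ff l P Q ∧ (p' ≤ p ∧ q' ≤ q) ∧ (p' * Q' - q' * P') ^ 2 = (p * Q - q * P) ^ 2 ∧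
  (ff l p' q' = ff l p q ∨ (P' ^ 2 ≤ ff l P Q ∧ Q' ^ 2 ≤ ff l P Q))

theorem good_swap (l p q P Q p' q' P' Q' : ℝ) (h : Good l p q P Q p' q' P' Q') :
    Good l q p Q P q' p' Q' P' := by
  obtain ⟨h1, h2, h3, h4⟩ := h
  have e : ∀ a b, ff l a b = ff l b a := fun a b => by unfold ff; ring
  refine ⟨by rwa [e Q', e Q], h2.symm, by linear_combination h3, ?_⟩
  rw [e q', e q, e Q]
  exact h4.imp id And.symm

theorem good_of (l : ℝ) (hl : 2 ≤ l) (p q P Q p' P' t u : ℝ) (ht : t = 1 ∨ t = -1)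
    (hu : u = 1 ∨ u = -1) (hp : 0 < p) (hq : 0 < q) (hP : 0 ≤ P) (hQ : 0 ≤ Q) (hp' : 0 < p')
    (hP' : 0 ≤ P') (h1 : p' = t * p + u * l * q) (h2 : P' = t * P + u * l * Q)
    (hE : ¬ (q < p' ∧ p ≤ p')) : Good l p q P Q p' q P' Q := by
  have hlq : 2 * q ≤ l * q := by nlinarith
  have hlQ : 0 ≤ l * Q := by nlinarith
  rcases ht with rfl | rfl <;> rcases hu with rfl | rfl
  · exact absurd ⟨by linarith, by linarith⟩ hE
  · have e1 : p = p' + l * q := by linarith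
    have e2 : P = P' + l * Q := by linarith
    have h5 : 0 ≤ l * Q * P' := mul_nonneg hlQ hP'
    refine ⟨?_, ⟨by linarith, le_rfl⟩, ?_, Or.inr ⟨?_, ?_⟩⟩
    · rw [e2]; unfold ff; nlinarith
    · rw [e1, e2]; ring
    · rw [e2]; unfold ff; nlinarith [sq_nonneg Q]
    · rw [e2]; unfold ff; nlinarith [sq_nonneg P']
  · have e1 : p = l * q - p' := by linarith
    have e2 : P = l * Q - P' := by linarith
    refine ⟨?_, ⟨?_, le_rfl⟩, ?_, Or.inl ?_⟩
    · rw [e2]; unfold ff; apply le_of_eq; ring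
    · by_contra hc
      push Not at hc
      apply hE
      exact ⟨by linarith, hc.le⟩
    · rw [e1, e2]; ring
    · rw [e1]; unfold ff; ring
  · linarith

def sg (b : Bool) : ℝ := if b then 1 else -1

theorem sg_or (b : Bool) : sg b = 1 ∨ sg b = -1 := by cases b <;> simp [sg]

theorem sg_sq (b : Bool) : sg b * sg b = 1 := by cases b <;> simp [sg]

theorem mul_or {a b : ℝ} (h : a = 1 ∨ a = -1) (h' : b = 1 ∨ b = -1) : a * b = 1 ∨ a * b = -1 := by
  rcases h with rfl | rfl <;> rcases h' with rfl | rfl <;> simp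

theorem sg_eq {a b : Bool} {x : ℝ} (ha : 0 < sg a * x) (hb : 0 < sg b * x) : a = b := by
  cases a <;> cases b <;> simp [sg] at * <;> linarith

theorem sg_abs {a : Bool} {x : ℝ} (ha : 0 < sg a * x) : |x| = sg a * x := by
  rw [← abs_of_pos ha, abs_mul]
  cases a <;> simp [sg]

theorem good_signed (l : ℝ) (hl : 2 ≤ l) (a b A B a' b' A' B' e : ℝ) (he : e = 1 ∨ e = -1)
    (s1 s2 s1' s2' : Bool) (ha : 0 < sg s1 * a) (hb : 0 < sg s2 * b) (ha' : 0 < sg s1' * a')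
    (hb' : 0 < sg s2' * b') (hA : 0 ≤ sg s1 * A) (hB : 0 ≤ sg s2 * B) (hA' : 0 ≤ sg s1' * A')
    (h1 : a' = a + e * l * b) (h2 : b' = b) (h3 : A' = A + e * l * B) (h4 : B' = B)
    (hE : ¬ (|b| < |a'| ∧ |a| ≤ |a'|)) :
    Good l (sg s1 * a) (sg s2 * b) (sg s1 * A) (sg s2 * B)
      (sg s1' * a') (sg s2' * b') (sg s1' * A') (sg s2' * B') := by
  subst h2 h4
  obtain rfl := sg_eq hb hb'
  rw [sg_abs ha, sg_abs hb, sg_abs ha'] at hE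
  refine good_of l hl _ _ _ _ _ _ (sg s1' * sg s1) (e * (sg s1' * sg s2)) ?_ ?_ ha hb hA hB ha' hA'
    ?_ ?_ hE
  · exact mul_or (sg_or _) (sg_or _)
  · exact mul_or he (mul_or (sg_or _) (sg_or _))
  · rw [h1]
    linear_combination (-sg s1' * a) * sg_sq s1 - (e * l * sg s1' * b') * sg_sq s2
  · rw [h3]
    linear_combination (-sg s1' * A) * sg_sq s1 - (e * l * sg s1' * B') * sg_sq s2

theorem final (l : ℝ) (hl : 2 ≤ l) (p q P Q : ℕ → ℝ) (hp : ∀ i, 0 < p i) (hq : ∀ i, 0 < q i)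
    (hG : ∀ i, Good l (p i) (q i) (P i) (Q i) (p (i+1)) (q (i+1)) (P (i+1)) (Q (i+1)))
    (hf : ∀ i, ff l (p i) (q i) ≠ 0)
    (hsh : ∀ ε, 0 < ε → ∃ i, p i ^ 2 + q i ^ 2 < ε) : p 0 * Q 0 - q 0 * P 0 = 0 := by
  have hap : Antitone p := antitone_nat_of_succ_le fun i => (hG i).2.1.1
  have haq : Antitone q := antitone_nat_of_succ_le fun i => (hG i).2.1.2
  have haF : Antitone fun i => ff l (P i) (Q i) := antitone_nat_of_succ_le fun i => (hG i).1
  have hsm : ∀ ε, 0 < ε → ∃ N, ∀ i, N ≤ i → p i ^ 2 + q i ^ 2 < ε := by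
    intro ε h
    obtain ⟨N, hN⟩ := hsh ε h
    refine ⟨N, fun i hi => lt_of_le_of_lt ?_ hN⟩
    have h1 := pow_le_pow_left₀ (hp i).le (hap hi) 2
    have h2 := pow_le_pow_left₀ (hq i).le (haq hi) 2
    linarith
  have hw : ∀ i, (p i * Q i - q i * P i) ^ 2 = (p 0 * Q 0 - q 0 * P 0) ^ 2 := by
    intro i
    induction i with
    | zero => rfl
    | succ i ih => rw [(hG i).2.2.1, ih]
  by_cases hinf : ∃ N, ∀ i, N ≤ i → ff l (p (i+1)) (q (i+1)) = ff l (p i) (q i)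
  · exfalso
    obtain ⟨N, hN⟩ := hinf
    have hc : ∀ i, N ≤ i → ff l (p i) (q i) = ff l (p N) (q N) := by
      intro i hi
      induction i, hi using Nat.le_induction with
      | base => rfl
      | succ i hi ih => rw [hN i hi, ih]
    apply hf N
    have hb : ∀ ε, 0 < ε → |ff l (p N) (q N)| ≤ l * ε := by
      intro ε he
      obtain ⟨M, hM⟩ := hsm ε he
      have h1 := hM (max M N) (le_max_left _ _)
      rw [← hc (max M N) (le_max_right _ _)]
      have h2 := hp (max M N)
      have h3 := hq (max M N)
      generalize p (max M N) = a at *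
      generalize q (max M N) = b at *
      unfold ff
      have h4 : 0 < a * b := mul_pos h2 h3
      have h5 : 2 * (a * b) ≤ a ^ 2 + b ^ 2 := by nlinarith [sq_nonneg (a - b)]
      rw [abs_le]
      constructor <;> nlinarith
    by_contra h0
    have h1 : 0 < |ff l (p N) (q N)| := abs_pos.2 h0
    have h2 := hb (|ff l (p N) (q N)| / (2 * l)) (by positivity)
    have h3 : l * (|ff l (p N) (q N)| / (2 * l)) = |ff l (p N) (q N)| / 2 := by field_simp
    rw [h3] at h2
    linarith
  · push Not at hinf
    by_contra h0
    have hd : 0 < (p 0 * Q 0 - q 0 * P 0) ^ 2 := by positivity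
    have hstep : ∀ N, ∃ i, N ≤ i ∧ P (i+1) ^ 2 ≤ ff l (P 0) (Q 0) ∧ Q (i+1) ^ 2 ≤ ff l (P 0) (Q 0) := by
      intro N
      obtain ⟨i, hi, hne⟩ := hinf N
      have h1 := (hG i).2.2.2.resolve_left hne
      have h2 : ff l (P i) (Q i) ≤ ff l (P 0) (Q 0) := haF (Nat.zero_le i)
      exact ⟨i, hi, h1.1.trans h2, h1.2.trans h2⟩
    set F := ff l (P 0) (Q 0)
    set D := (p 0 * Q 0 - q 0 * P 0) ^ 2
    have hF : 0 ≤ F := by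
      obtain ⟨i, _, h, _⟩ := hstep 0
      exact (sq_nonneg _).trans h
    obtain ⟨N, hN⟩ := hsm (D / (2 * F + 1)) (by positivity)
    obtain ⟨i, hi, h1, h2⟩ := hstep N
    have h3 := hN (i + 1) (by omega)
    have h4 := hw (i + 1)
    rw [lt_div_iff₀ (by positivity)] at h3
    generalize p (i+1) = a at *
    generalize q (i+1) = b at *
    generalize P (i+1) = A at *
    generalize Q (i+1) = B at *
    have h5 : a ^ 2 * B ^ 2 ≤ a ^ 2 * F := mul_le_mul_of_nonneg_left h2 (sq_nonneg _)
    have h6 : b ^ 2 * A ^ 2 ≤ b ^ 2 * F := mul_le_mul_of_nonneg_left h1 (sq_nonneg _)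
    nlinarith [sq_nonneg (a * B + b * A), sq_nonneg a, sq_nonneg b]

theorem quad_pos {s : SP} {x : Fin 2 → ℝ} (h : x ∈ Quad s) : 0 < sg s.1 * x 0 ∧ 0 < sg s.2 * x 1 := by
  obtain ⟨s1, s2⟩ := s
  cases s1 <;> cases s2 <;> simpa [Quad, sg] using h

theorem quad_cl {s : SP} {x : Fin 2 → ℝ} (h : x ∈ closure (Quad s)) :
    0 ≤ sg s.1 * x 0 ∧ 0 ≤ sg s.2 * x 1 := by
  have hc : IsClosed {x : Fin 2 → ℝ | 0 ≤ sg s.1 * x 0 ∧ 0 ≤ sg s.2 * x 1} := by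
    have h1 : IsClosed {x : Fin 2 → ℝ | 0 ≤ sg s.1 * x 0} :=
      isClosed_le continuous_const (by fun_prop)
    have h2 : IsClosed {x : Fin 2 → ℝ | 0 ≤ sg s.2 * x 1} :=
      isClosed_le continuous_const (by fun_prop)
    exact h1.inter h2
  have hsub : Quad s ⊆ {x : Fin 2 → ℝ | 0 ≤ sg s.1 * x 0 ∧ 0 ≤ sg s.2 * x 1} :=
    fun y hy => ⟨(quad_pos hy).1.le, (quad_pos hy).2.le⟩
  exact closure_minimal hsub hc h

theorem nrm_lt {x : Fin 2 → ℝ} {ε : ℝ} (h : nrm x < Real.sqrt ε) : n2 x < ε :=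
  lt_of_not_ge fun hc => absurd (Real.sqrt_le_sqrt hc) (not_le.2 h)

def lett (k : Bool) (b : Bool) : F2 :=
  if k then (if b then gh else gh⁻¹) else (if b then gv else gv⁻¹)

theorem lett_step (l : ℝ) (k b : Bool) (x : Fin 2 → ℝ) : LStep l k (sg b) x (act l (lett k b) x) := by
  cases k <;> cases b <;> simp [LStep, lett, sg, act_gh, act_gv, act_ghi, act_gvi] <;> ring

theorem lett_of_gens {c : F2} (h : c ∈ gens) : ∃ k b, c = lett k b := by
  rcases h with h | h | h | h
  · exact ⟨true, true, h⟩
  · exact ⟨false, true, h⟩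
  · exact ⟨true, false, h⟩
  · exact ⟨false, false, h⟩

theorem stmt10 (l : ℝ) (hl : 2 ≤ l) (x : Fin 2 → ℝ) (hx : x ∈ Circ)
    (hren : Renormalizable l x)
    (g : ℕ → F2) (hg : IsGeodesicRay g) (hgs : IsShrinkingSeq l g x)
    (s : ℕ → SP) (hs : ∀ i, act l (g i) x ∈ Quad (s i))
    (w : Fin 2 → ℝ) (hw : w ∈ Circ)
    (hwq : ∀ i : ℕ, act l (g i) w ∈ closure (Quad (s i))) :
    w = x := by
  obtain ⟨hg0, hg1, hg2⟩ := hg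
  choose k b hkb using fun n => lett_of_gens (hg1 n)
  have hgn : ∀ n, g (n + 1) = lett (k n) (b n) * g n := fun n => by rw [← hkb n]; group
  have hX : ∀ n, LStep l (k n) (sg (b n)) (act l (g n) x) (act l (g (n+1)) x) := by
    intro n; rw [hgn, act_mul]; exact lett_step _ _ _ _
  have hW : ∀ n, LStep l (k n) (sg (b n)) (act l (g n) w) (act l (g (n+1)) w) := by
    intro n; rw [hgn, act_mul]; exact lett_step _ _ _ _
  have hnb : ∀ n, k n = k (n + 1) → sg (b n) = sg (b (n + 1)) := by
    intro n hk
    by_contra hne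
    apply hg2 n
    rw [show n + 2 = (n + 1) + 1 from rfl, hgn (n + 1), hgn n, ← hk]
    have : b (n + 1) = !(b n) := by
      cases h1 : b n <;> cases h2 : b (n + 1) <;> simp [h1, h2] at hne ⊢
    rw [this]
    cases k n <;> cases b n <;> simp [lett]
  have hq := fun i => quad_pos (hs i)
  have hc := fun i => quad_cl (hwq i)
  have hpos : ∀ n, 0 < n2 (act l (g n) x) := by
    intro n
    have h1 : act l (g n) x 0 ≠ 0 := fun h => by have := (hq n).1; rw [h] at this; simp at this
    unfold n2; positivity
  have hsh : ∀ ε, 0 < ε → ∃ i, n2 (act l (g i) x) < ε := by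
    intro ε he
    obtain ⟨i, hi⟩ := hgs (Real.sqrt ε) (Real.sqrt_pos.2 he)
    exact ⟨i, nrm_lt hi⟩
  have hnoE := no_E l hl (fun n => act l (g n) x) k (fun n => sg (b n)) (fun n => sg_or _) hnb hX
    hpos hsh
  have hwedge := final l hl (fun i => sg (s i).1 * act l (g i) x 0)
    (fun i => sg (s i).2 * act l (g i) x 1)
    (fun i => sg (s i).1 * act l (g i) w 0) (fun i => sg (s i).2 * act l (g i) w 1)
    (fun i => (hq i).1) (fun i => (hq i).2) ?_ ?_ ?_
  · simp only [hg0, act_one] at hwedge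
    have hq0 := hq 0
    have hc0 := hc 0
    rw [hg0, act_one] at hq0 hc0
    have hd : 0 ≤ x 0 * w 0 + x 1 * w 1 := by
      have h1 := mul_nonneg hq0.1.le hc0.1
      have h2 := mul_nonneg hq0.2.le hc0.2
      linear_combination h1 + h2 + (x 0 * w 0) * sg_sq (s 0).1 + (x 1 * w 1) * sg_sq (s 0).2
    have hwe : x 0 * w 1 - x 1 * w 0 = 0 := by
      rcases sg_or (s 0).1 with h1 | h1 <;> rcases sg_or (s 0).2 with h2 | h2 <;>
        rw [h1, h2] at hwedge <;> linarith
    have hx1 : x 0 ^ 2 + x 1 ^ 2 = 1 := by simpa [Circ, nrm] using hx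
    have hw1 : w 0 ^ 2 + w 1 ^ 2 = 1 := by simpa [Circ, nrm] using hw
    have hd2 : (x 0 * w 0 + x 1 * w 1) ^ 2 = 1 := by
      linear_combination (w 0 ^ 2 + w 1 ^ 2) * hx1 + hw1 - (x 0 * w 1 - x 1 * w 0) * hwe
    have hd3 : x 0 * w 0 + x 1 * w 1 = 1 := by nlinarith
    have h0 : (w 0 - x 0) ^ 2 + (w 1 - x 1) ^ 2 = 0 := by linear_combination hx1 + hw1 - 2 * hd3
    ext i
    fin_cases i
    · show w 0 = x 0
      nlinarith [sq_nonneg (w 0 - x 0), sq_nonneg (w 1 - x 1)]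
    · show w 1 = x 1
      nlinarith [sq_nonneg (w 0 - x 0), sq_nonneg (w 1 - x 1)]
  · intro i
    have hXi := hX i
    have hWi := hW i
    have hE := hnoE i
    cases hk : k i
    · rw [hk] at hXi hWi hE
      simp only [LStep, EStep, if_false, Bool.false_eq_true] at hXi hWi hE
      exact good_swap _ _ _ _ _ _ _ _ _ (good_signed l hl _ _ _ _ _ _ _ _ _ (sg_or (b i)) _ _ _ _
        (hq i).2 (hq i).1 (hq (i+1)).2 (hq (i+1)).1 (hc i).2 (hc i).1 (hc (i+1)).2
        hXi.1 hXi.2 hWi.1 hWi.2 hE)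
    · rw [hk] at hXi hWi hE
      simp only [LStep, EStep, if_true] at hXi hWi hE
      exact good_signed l hl _ _ _ _ _ _ _ _ _ (sg_or (b i)) _ _ _ _
        (hq i).1 (hq i).2 (hq (i+1)).1 (hq (i+1)).2 (hc i).1 (hc i).2 (hc (i+1)).1
        hXi.1 hXi.2 hWi.1 hWi.2 hE
  · intro i h
    have h1 : act l (g i) x 0 ≠ 0 := fun h => by have := (hq i).1; rw [h] at this; simp at this
    have h2 : act l (g i) x 1 ≠ 0 := fun h => by have := (hq i).2; rw [h] at this; simp at this
    have hp := no_eig_pos l x hren (g i) h2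
    have hn := no_eig_neg l x hren (g i) h1
    unfold ff at h
    rcases sg_or (s i).1 with h3 | h3 <;> rcases sg_or (s i).2 with h4 | h4 <;> rw [h3, h4] at h
    · apply hp; linarith
    · apply hn; linarith
    · apply hn; linarith
    · apply hp; linarith
  · intro ε he
    obtain ⟨i, hi⟩ := hsh ε he
    refine ⟨i, lt_of_le_of_lt (le_of_eq ?_) hi⟩
    unfold n2
    linear_combination (act l (g i) x 0) ^ 2 * sg_sq (s i).1 + (act l (g i) x 1) ^ 2 * sg_sq (s i).2
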